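/- Let ρ = exp(−H₀) and σ = ρ_X = exp(−(H₀+X)) be faithful density operators (Tr ρ = Tr σ = 1) on a separable Hilbert space H, with X bounded and σ nearby ρ. Then the trace-norm distance is controlled by the operator norm of the relative Hamiltonian: ‖ρ − σ‖₁ ≤ ‖X‖. Consequently, since ‖X‖ ≤ ‖X‖_A, the trace norm on states is weaker than the Araki norm on perturbations. -/

import Mathlib

open scoped InnerProductSpace ENNReal NNReal
open MeasureTheory Metric Filter

noncomputable section

variable {H : Type*} [NormedAddCommGroup H] [InnerProductSpace ℂ H] [CompleteSpace H]
  [TopologicalSpace.SeparableSpace H]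

/-- The real power `ρ ^ t` (for `t ≥ 0`) of a positive operator `ρ`, via the continuous
functional calculus. -/
def opow (ρ : H →L[ℂ] H) (t : ℝ) : H →L[ℂ] H := cfc (fun x : ℝ => x ^ t) ρ

/-- The (real) trace of an operator, computed along the Hilbert basis `b`. -/
def trElem {ι : Type*} (b : HilbertBasis ι ℂ H) (T : H →L[ℂ] H) : ℝ :=
  ∑' i, (⟪b i, T (b i)⟫_ℂ).re

/-- `ρ` is a finite faithful weight: a positive, injective, trace-class operator
(trace-class being witnessed by summability of the diagonal in the Hilbert basis `b`). -/
def IsFiniteWeight {ι : Type*} (b : HilbertBasis ι ℂ H) (ρ : H →L[ℂ] H) : Prop :=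
  0 ≤ ρ ∧ Function.Injective (⇑ρ) ∧ Summable (fun i => (⟪b i, ρ (b i)⟫_ℂ).re)

/-- `σ` is nearby `ρ`: there is `C > 1` with `C⁻¹ ρ ≤ σ ≤ C ρ` in the Loewner order. -/
def IsNearby (σ ρ : H →L[ℂ] H) : Prop :=
  ∃ C : ℝ, 1 < C ∧ C⁻¹ • ρ ≤ σ ∧ σ ≤ C • ρ

/-- `F` is the Araki family `t ↦ ρ^t X ρ^{-t}` of `X` relative to `ρ`: a bounded holomorphic
`B(H)`-valued extension to the disc `|t| < 1/2` of `t ↦ ρ^t X ρ^{-t}`, the latter being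
expressed by `F t * ρ^t = ρ^t * X` and `ρ^t * F (-t) = X * ρ^t` for real `0 ≤ t < 1/2`. -/
def IsArakiFamily (ρ X : H →L[ℂ] H) (F : ℂ → H →L[ℂ] H) : Prop :=
  DifferentiableOn ℂ F (ball (0:ℂ) (1/2)) ∧
  (∃ M : ℝ, ∀ t ∈ ball (0:ℂ) (1/2), ‖F t‖ ≤ M) ∧
  (∀ t : ℝ, 0 ≤ t → t < 1/2 → F (t:ℂ) * opow ρ t = opow ρ t * X) ∧
  (∀ t : ℝ, 0 ≤ t → t < 1/2 → opow ρ t * F (-(t:ℂ)) = X * opow ρ t)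

/-- `X` satisfies the Araki condition for `ρ`. -/
def SatisfiesAraki (ρ X : H →L[ℂ] H) : Prop := ∃ F, IsArakiFamily ρ X F

/-- The Araki norm `‖X‖_A = sup_{|t| < 1/2} ‖ρ^t X ρ^{-t}‖`. -/
def arakiNorm (ρ X : H →L[ℂ] H) : ℝ :=
  sInf {M : ℝ | 0 ≤ M ∧ ∃ F, IsArakiFamily ρ X F ∧ ∀ t ∈ ball (0:ℂ) (1/2), ‖F t‖ ≤ M}

/-- `σ = exp (-(H₀ + X))` where `ρ = exp (-H₀)`: the semigroup `t ↦ σ^t` is the mild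
(Duhamel) solution of the semigroup `t ↦ ρ^t` perturbed by the bounded operator `-X`,
i.e. `σ^t = ρ^t - ∫_0^t ρ^{t-s} X σ^s ds` for all `t ≥ 0`. -/
def IsExpPerturbed (ρ σ X : H →L[ℂ] H) : Prop :=
  ∀ t : ℝ, 0 ≤ t →
    opow σ t = opow ρ t - ∫ s in (0:ℝ)..t, opow ρ (t - s) * X * opow σ s

/-- The truncation `x ↦ -log (x + e^{-n})` of `-log`; it increases pointwise to `-log x`
as `n → ∞` and is operator anti-monotone. -/
def negLogTrunc (n : ℕ) (x : ℝ) : ℝ := - Real.log (x + Real.exp (-(n:ℝ)))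

/-- The regularised quadratic form `⟪ξ, (-log (ρ + e^{-n})) ξ⟫` of `H₀ = -log ρ`. -/
def negLogFormSeq (ρ : H →L[ℂ] H) (ξ : H) (n : ℕ) : ℝ :=
  (⟪ξ, (cfc (negLogTrunc n) ρ) ξ⟫_ℂ).re

/-- `ξ` lies in the form domain `Q(H₀) = Dom (H₀^{1/2})` of `H₀ = -log ρ`. -/
def InFormDomain (ρ : H →L[ℂ] H) (ξ : H) : Prop :=
  BddAbove (Set.range (negLogFormSeq ρ ξ))

/-- The value `⟪ξ, H₀ ξ⟫` of the quadratic form of `H₀ = -log ρ` (a monotone limit). -/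
def negLogForm (ρ : H →L[ℂ] H) (ξ : H) : ℝ := ⨆ n, negLogFormSeq ρ ξ n

/-- The regularised quadratic form `⟪ξ, (σ + e^{-n})⁻¹ ξ⟫` of `σ⁻¹`. -/
def invFormSeq (σ : H →L[ℂ] H) (ξ : H) (n : ℕ) : ℝ :=
  (⟪ξ, (cfc (fun x : ℝ => (x + Real.exp (-(n:ℝ)))⁻¹) σ) ξ⟫_ℂ).re

/-- The quadratic form `⟪ξ, σ⁻¹ ξ⟫ ∈ [0, ∞]` of the (possibly unbounded) inverse `σ⁻¹`
of the injective positive operator `σ`, as a monotone limit of regularisations. -/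
def invForm (σ : H →L[ℂ] H) (ξ : H) : ℝ≥0∞ :=
  ⨆ n : ℕ, ENNReal.ofReal (invFormSeq σ ξ n)

/-- `S` is the relative entropy `S(ρ|σ) = Tr (ρ (log ρ - log σ))`, obtained as the limit of
the regularised quantities `Tr (ρ (log (ρ + e^{-n}) - log (σ + e^{-n})))`. -/
def IsRelativeEntropy {ι : Type*} (b : HilbertBasis ι ℂ H) (ρ σ : H →L[ℂ] H) (S : ℝ) : Prop :=
  Tendsto (fun n : ℕ => trElem b (ρ * (cfc (negLogTrunc n) σ - cfc (negLogTrunc n) ρ)))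
    atTop (nhds S)

/-- The `n`-th term of the Matsubara (Dyson/expansional) series: the integral over the
ordered simplex `0 ≤ s₁ ≤ ⋯ ≤ sₙ ≤ 1` (of volume `1/n!`) of the product
`F(s₁ - 1/2) ⋯ F(sₙ - 1/2)`, where `F t = ρ^t X ρ^{-t}`. -/
def matsubaraTerm (F : ℂ → H →L[ℂ] H) (n : ℕ) : H →L[ℂ] H :=
  ∫ s in {s : Fin n → ℝ | (∀ i, s i ∈ Set.Icc (0:ℝ) 1) ∧ Monotone s},
    (List.ofFn fun i => F (((s i - 1/2 : ℝ) : ℂ))).prod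

/-! At `t = 1` the Duhamel formula reads `ρ - σ = ∫ s in 0..1, ρ ^ (1 - s) X σ ^ s`. Pairing this
with the signs of the eigenvalues of the compact operator `ρ - σ` turns its trace norm into an
integral of traces `Tr (ρ ^ (1 - s) X σ ^ s U)` with `‖U‖ ≤ 1`. In eigenbases `ρ e_k = l_k e_k` and
`σ f_j = m_j f_j` such a trace is `∑ l_k ^ (1 - s) m_j ^ s ⟪e_k, X f_j⟫ ⟪f_j, U e_k⟫`. Young's
inequality bounds the powers by `(1 - s) l_k + s m_j`, and by Bessel's inequality every row and
every column of the matrix `|⟪e_k, X f_j⟫ ⟪f_j, U e_k⟫|` sums to at most `‖X‖`, so the trace is at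
most `‖X‖ ((1 - s) Tr ρ + s Tr σ)`. -/

section OrthonormalExpansions

variable {𝕜 E ι : Type*} [RCLike 𝕜] [NormedAddCommGroup E] [InnerProductSpace 𝕜 E]

lemma hasSum_norm_sq_inner (b : HilbertBasis ι 𝕜 E) (x : E) :
    HasSum (fun i => ‖inner 𝕜 (b i) x‖ ^ 2) (‖x‖ ^ 2) := by
  have h := (b.hasSum_inner_mul_inner x x).mapL RCLike.reCLM
  simpa only [inner_mul_symm_re_eq_norm, RCLike.reCLM_apply, norm_mul, norm_inner_symm x, ← sq,
    inner_self_eq_norm_sq] using h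

lemma hasSum_eigenvalue_mul_inner_mul_inner [CompleteSpace E] (e : HilbertBasis ι 𝕜 E)
    {T : E →L[𝕜] E} (hT : IsSelfAdjoint T) {a : ι → ℝ} (he : ∀ i, T (e i) = (a i : 𝕜) • e i)
    (x y : E) :
    HasSum (fun i => (a i : 𝕜) * (inner 𝕜 x (e i) * inner 𝕜 (e i) y)) (inner 𝕜 x (T y)) := by
  have coefficient (i : ι) : inner 𝕜 (e i) (T y) = a i * inner 𝕜 (e i) y := by
    rw [← ContinuousLinearMap.coe_coe, ← hT.isSymmetric, ContinuousLinearMap.coe_coe, he,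
      inner_smul_left, RCLike.conj_ofReal]
  simpa only [coefficient, mul_left_comm] using e.hasSum_inner_mul_inner x (T y)

-- Both sides compute the trace of `T * Y * U`, where `U = ∑ k ∈ s, c k • rankOne (v k) (v k)`.
lemma hasSum_eigenvalue_mul_inner_sum_smul_rankOne [CompleteSpace E] {κ : Type*}
    (e : HilbertBasis ι 𝕜 E) {T : E →L[𝕜] E} (hT : IsSelfAdjoint T) {a : ι → ℝ}
    (he : ∀ i, T (e i) = (a i : 𝕜) • e i) (Y : E →L[𝕜] E) (s : Finset κ) (c : κ → 𝕜) (v : κ → E) :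
    HasSum (fun i => (a i : 𝕜) *
        inner 𝕜 (e i) (Y ((∑ k ∈ s, c k • InnerProductSpace.rankOne 𝕜 (v k) (v k)) (e i))))
      (∑ k ∈ s, c k * inner 𝕜 (v k) (T (Y (v k)))) := by
  have expansion := hasSum_sum (s := s) fun k _ =>
    (hasSum_eigenvalue_mul_inner_mul_inner e hT he (v k) (Y (v k))).mul_left (c k)
  refine expansion.congr_fun fun i => ?_
  simp only [sum_apply, smul_apply, InnerProductSpace.rankOne_apply, map_sum, map_smul, inner_sum,
    inner_smul_right, Finset.mul_sum]
  exact Finset.sum_congr rfl fun k _ => by ring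

lemma re_inner_apply_eigenvector {T : E →L[𝕜] E} {e : E} (he : ‖e‖ = 1) {l : ℝ}
    (h : T e = (l : 𝕜) • e) : RCLike.re (inner 𝕜 e (T e)) = l := by
  simp [h, inner_smul_right, inner_self_eq_norm_sq_to_K, he]

lemma sum_norm_inner_mul_norm_inner_le {v : ι → E} (hv : Orthonormal 𝕜 v) (s : Finset ι)
    (x y : E) : ∑ i ∈ s, ‖inner 𝕜 x (v i)‖ * ‖inner 𝕜 (v i) y‖ ≤ ‖x‖ * ‖y‖ := by
  have bessel (z : E) : √(∑ i ∈ s, ‖inner 𝕜 (v i) z‖ ^ 2) ≤ ‖z‖ :=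
    (Real.sqrt_le_left (norm_nonneg z)).2 (hv.sum_inner_products_le z)
  simp only [norm_inner_symm x]
  exact (Real.sum_mul_le_sqrt_mul_sqrt s _ _).trans
    (mul_le_mul (bessel x) (bessel y) (Real.sqrt_nonneg _) (norm_nonneg x))

lemma norm_sum_smul_rankOne_le_one {v : ι → E} (hv : Orthonormal 𝕜 v) (s : Finset ι) {c : ι → 𝕜}
    (hc : ∀ i, ‖c i‖ ≤ 1) : ‖∑ i ∈ s, c i • InnerProductSpace.rankOne 𝕜 (v i) (v i)‖ ≤ 1 := by
  refine ContinuousLinearMap.opNorm_le_bound _ zero_le_one fun x => ?_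
  have pythagoras : ‖∑ i ∈ s, (c i * inner 𝕜 (v i) x) • v i‖ ^ 2 =
      ∑ i ∈ s, ‖c i * inner 𝕜 (v i) x‖ ^ 2 := by
    rw [← inner_self_eq_norm_sq (𝕜 := 𝕜), hv.inner_sum, map_sum]
    simp only [RCLike.conj_mul, ← RCLike.ofReal_pow, RCLike.ofReal_re]
  rw [one_mul, ← sq_le_sq₀ (norm_nonneg _) (norm_nonneg x)]
  calc ‖(∑ i ∈ s, c i • InnerProductSpace.rankOne 𝕜 (v i) (v i)) x‖ ^ 2
      = ∑ i ∈ s, ‖c i * inner 𝕜 (v i) x‖ ^ 2 := by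
        simp only [← pythagoras, sum_apply, smul_apply, InnerProductSpace.rankOne_apply, smul_smul]
    _ ≤ ∑ i ∈ s, ‖inner 𝕜 (v i) x‖ ^ 2 := by
        gcongr with i
        rw [norm_mul]
        exact mul_le_of_le_one_left (norm_nonneg _) (hc i)
    _ ≤ ‖x‖ ^ 2 := hv.sum_inner_products_le x

end OrthonormalExpansions

section HilbertSchmidt

variable {𝕜 E G ι : Type*} [RCLike 𝕜] [NormedAddCommGroup E] [InnerProductSpace 𝕜 E]
  [NormedAddCommGroup G] [InnerProductSpace 𝕜 G]

lemma isCompactOperator_rankOne (x : G) (y : E) :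
    IsCompactOperator (InnerProductSpace.rankOne 𝕜 x y) :=
  (isCompactOperator_of_locallyCompactSpace_dom (innerSL 𝕜 y)).clm_comp
    (ContinuousLinearMap.toSpanSingleton 𝕜 x)

lemma norm_sub_sum_rankOne_le (b : HilbertBasis ι 𝕜 E) {T : E →L[𝕜] G}
    (hT : Summable fun i => ‖T (b i)‖ ^ 2) (s : Finset ι) :
    ‖T - ∑ i ∈ s, InnerProductSpace.rankOne 𝕜 (T (b i)) (b i)‖ ≤
      √(∑' i : {i // i ∉ s}, ‖T (b i)‖ ^ 2) := by
  refine ContinuousLinearMap.opNorm_le_bound _ (Real.sqrt_nonneg _) fun x => ?_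
  have expansion : HasSum (fun i : {i // i ∉ s} => inner 𝕜 (b i) x • T (b i))
      ((T - ∑ i ∈ s, InnerProductSpace.rankOne 𝕜 (T (b i)) (b i)) x) := by
    refine (s.hasSum_compl_iff (f := fun i => inner 𝕜 (b i) x • T (b i))).2 ?_
    simpa [b.repr_apply_apply] using (b.hasSum_repr x).mapL T
  refine le_of_tendsto expansion.norm (.of_forall fun J => ?_)
  have hJ : √(∑ i ∈ J, ‖T (b i)‖ ^ 2) ≤ √(∑' i : {i // i ∉ s}, ‖T (b i)‖ ^ 2) :=
    Real.sqrt_le_sqrt ((hT.subtype _).sum_le_tsum J fun _ _ => sq_nonneg _)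
  have bessel : √(∑ i ∈ J, ‖inner 𝕜 (b i) x‖ ^ 2) ≤ ‖x‖ :=
    (Real.sqrt_le_left (norm_nonneg x)).2
      ((b.orthonormal.comp _ Subtype.val_injective).sum_inner_products_le x)
  calc ‖∑ i ∈ J, inner 𝕜 (b i) x • T (b i)‖
      ≤ ∑ i ∈ J, ‖T (b i)‖ * ‖inner 𝕜 (b i) x‖ :=
        norm_sum_le_of_le _ fun i _ => by rw [norm_smul, mul_comm]
    _ ≤ √(∑ i ∈ J, ‖T (b i)‖ ^ 2) * √(∑ i ∈ J, ‖inner 𝕜 (b i) x‖ ^ 2) :=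
        Real.sum_mul_le_sqrt_mul_sqrt _ _ _
    _ ≤ √(∑' i : {i // i ∉ s}, ‖T (b i)‖ ^ 2) * ‖x‖ := by gcongr

lemma isCompactOperator_of_summable_norm_sq [CompleteSpace G] (b : HilbertBasis ι 𝕜 E)
    {T : E →L[𝕜] G} (hT : Summable fun i => ‖T (b i)‖ ^ 2) : IsCompactOperator T := by
  have tail := (tendsto_tsum_compl_atTop_zero fun i => ‖T (b i)‖ ^ 2).sqrt
  rw [Real.sqrt_zero] at tail
  refine isCompactOperator_of_tendsto (l := atTop)
    (F := fun s => ∑ i ∈ s, InnerProductSpace.rankOne 𝕜 (T (b i)) (b i)) ?_ (.of_forall fun s =>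
      (compactOperator (RingHom.id 𝕜) E G).sum_mem fun i _ => isCompactOperator_rankOne _ _)
  refine tendsto_iff_norm_sub_tendsto_zero.2 (squeeze_zero (fun _ => norm_nonneg _) ?_ tail)
  exact fun s => (norm_sub_rev _ _).trans_le (norm_sub_sum_rankOne_le b hT s)

end HilbertSchmidt

section Eigenbasis

universe u v

variable {𝕜 : Type v} {E : Type u} [RCLike 𝕜] [NormedAddCommGroup E] [InnerProductSpace 𝕜 E]
  [CompleteSpace E]

lemma exists_hilbertBasis_mem_of_orthogonalFamily {ι : Type v} {V : ι → Submodule 𝕜 E}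
    [∀ i, CompleteSpace (V i)] (hV : OrthogonalFamily 𝕜 (V ·) fun i => (V i).subtypeₗᵢ)
    (hbot : (⨆ i, V i)ᗮ = ⊥) :
    ∃ (κ : Type (max u v)) (e : HilbertBasis κ 𝕜 E), ∀ k, ∃ i, e k ∈ V i := by
  choose w B _ using fun i => exists_hilbertBasis 𝕜 (V i)
  let v : (Σ i, w i) → E := fun a => (V a.1).subtypeₗᵢ (B a.1 a.2)
  have orthonormal : Orthonormal 𝕜 v :=
    hV.orthonormal_sigma_orthonormal fun i => (B i).orthonormal
  have complete : (Submodule.span 𝕜 (Set.range v))ᗮ = ⊥ := by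
    rw [eq_bot_iff, ← hbot, ← Submodule.iInf_orthogonal]
    refine fun x hx => (Submodule.mem_iInf _).2 fun i => ?_
    have coefficients_zero (j : w i) :
        inner 𝕜 (B i j) ((V i).orthogonalProjectionOnto x) = 0 := by
      rw [Submodule.inner_orthogonalProjectionOnto_eq_of_mem_left]
      exact hx _ (Submodule.subset_span ⟨⟨i, j⟩, rfl⟩)
    have parseval := hasSum_norm_sq_inner (B i) ((V i).orthogonalProjectionOnto x)
    simp only [coefficients_zero, norm_zero, zero_pow two_ne_zero] at parseval
    rw [← Submodule.orthogonalProjectionOnto_eq_zero_iff, ← norm_eq_zero]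
    exact pow_eq_zero_iff two_ne_zero |>.1 (parseval.unique hasSum_zero)
  refine ⟨_, HilbertBasis.mkOfOrthogonalEqBot orthonormal complete, fun k => ⟨k.1, ?_⟩⟩
  rw [HilbertBasis.coe_mkOfOrthogonalEqBot]
  exact (B k.1 k.2).2

lemma exists_hilbertBasis_eigenvectors {T : E →L[𝕜] E} (hT : IsSelfAdjoint T)
    (hc : IsCompactOperator T) :
    ∃ (κ : Type (max u v)) (e : HilbertBasis κ 𝕜 E) (l : κ → ℝ),
      ∀ k, T (e k) = (l k : 𝕜) • e k := by
  have hsymm := hT.isSymmetric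
  have (μ : 𝕜) : CompleteSpace (Module.End.eigenspace (T : Module.End 𝕜 E) μ) := by
    rw [Module.End.eigenspace_def]
    exact (T - algebraMap 𝕜 (E →L[𝕜] E) μ).isClosed_ker.completeSpace_coe
  obtain ⟨κ, e, he⟩ := exists_hilbertBasis_mem_of_orthogonalFamily
    hsymm.orthogonalFamily_eigenspaces
    (ContinuousLinearMap.orthogonalComplement_iSup_eigenspaces_eq_bot hc hsymm)
  choose μ hμ using he
  refine ⟨κ, e, fun k => RCLike.re (μ k), fun k => ?_⟩
  have hreal := hsymm.conj_eigenvalue_eq_self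
    (Module.End.hasEigenvalue_of_hasEigenvector ⟨hμ k, e.orthonormal.ne_zero k⟩)
  rw [RCLike.conj_eq_iff_re.1 hreal]
  exact Module.End.mem_eigenspace_iff.1 (hμ k)

end Eigenbasis

section FunctionalCalculus

variable {E : Type*} [NormedAddCommGroup E] [InnerProductSpace ℂ E]

lemma mem_spectrum_of_apply_eq_smul {T : E →L[ℂ] E} {e : E} (he : e ≠ 0) {l : ℝ}
    (h : T e = (l : ℂ) • e) : l ∈ spectrum ℝ T := by
  rintro ⟨u, hu⟩
  have in_kernel : (u : E →L[ℂ] E) e = 0 := by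
    rw [hu, sub_apply, h, Algebra.algebraMap_eq_smul_one, smul_apply, one_apply_eq_self,
      Complex.coe_smul, sub_self]
  have inverse_apply := congrArg (· e) u.inv_mul
  simp only [mul_apply_eq_comp, in_kernel, map_zero, one_apply_eq_self] at inverse_apply
  exact he inverse_apply.symm

variable [CompleteSpace E]

lemma cfc_apply_eigenvector {T : E →L[ℂ] E} (hT : IsSelfAdjoint T) {e : E} (he : e ≠ 0) {l : ℝ}
    (h : T e = (l : ℂ) • e) {f : ℝ → ℝ} (hf : ContinuousOn f (spectrum ℝ T)) :
    cfc f T e = (f l : ℂ) • e := by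
  let l' : spectrum ℝ T := ⟨l, mem_spectrum_of_apply_eq_smul he h⟩
  suffices ∀ g : C(spectrum ℝ T, ℝ), cfcHom hT g e = (g l' : ℂ) • e by
    rw [cfc_apply f T hT hf]
    exact this _
  intro g
  induction g using ContinuousMap.induction_on_of_compact with
  | const r =>
    change cfcHom hT (algebraMap ℝ C(spectrum ℝ T, ℝ) r) e = (r : ℂ) • e
    rw [AlgHomClass.commutes, Algebra.algebraMap_eq_smul_one]
    simp
  | id => rw [cfcHom_id hT, h]; rfl
  | star_id => rw [star_trivial, cfcHom_id hT, h]; rfl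
  | add f g hf hg =>
    rw [map_add, add_apply, hf, hg, ContinuousMap.add_apply, Complex.ofReal_add, add_smul]
  | mul f g hf hg =>
    rw [map_mul, mul_apply_eq_comp, hg, map_smul, hf, smul_smul, ContinuousMap.mul_apply,
      Complex.ofReal_mul, mul_comm]
  | frequently f hf =>
    have closed : IsClosed {g : C(spectrum ℝ T, ℝ) | cfcHom hT g e = (g l' : ℂ) • e} :=
      isClosed_eq ((ContinuousLinearMap.apply ℂ E e).continuous.comp (cfcHom_continuous hT))
        (by fun_prop)
    exact closed.mem_of_frequently_of_tendsto hf tendsto_id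

lemma re_inner_apply_eq_norm_sqrt_sq {T : E →L[ℂ] E} (hT : 0 ≤ T) (x : E) :
    (⟪x, T x⟫_ℂ).re = ‖CFC.sqrt T x‖ ^ 2 := by
  have symmetric := (IsSelfAdjoint.of_nonneg (CFC.sqrt_nonneg T)).isSymmetric
  conv_lhs => rw [← CFC.sqrt_mul_sqrt_self T hT, mul_apply_eq_comp]
  rw [← ContinuousLinearMap.coe_coe, ← symmetric]
  exact inner_self_eq_norm_sq (𝕜 := ℂ) _

end FunctionalCalculus

section TraceClass

/-- Positive trace-class operators: positivity together with summability of the diagonal in the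
Hilbert basis `b`. By `IsPosTraceClass.of_sum_re_inner_le` the choice of basis is immaterial. -/
def IsPosTraceClass {E ι : Type*} [NormedAddCommGroup E] [InnerProductSpace ℂ E]
    [CompleteSpace E] (b : HilbertBasis ι ℂ E) (T : E →L[ℂ] E) : Prop :=
  0 ≤ T ∧ Summable fun i => (⟪b i, T (b i)⟫_ℂ).re

namespace IsPosTraceClass

universe u

variable {E : Type u} {ι κ : Type*} [NormedAddCommGroup E] [InnerProductSpace ℂ E]
  [CompleteSpace E] {b : HilbertBasis ι ℂ E} {T : E →L[ℂ] E}

lemma trElem_nonneg (hT : IsPosTraceClass b T) : 0 ≤ trElem b T :=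
  tsum_nonneg fun i => (re_inner_apply_eq_norm_sqrt_sq hT.1 (b i)).symm ▸ sq_nonneg _

lemma sum_re_inner_le_trElem (hT : IsPosTraceClass b T) {v : κ → E} (hv : Orthonormal ℂ v)
    (s : Finset κ) : ∑ k ∈ s, (⟪v k, T (v k)⟫_ℂ).re ≤ trElem b T := by
  have symmetric := (IsSelfAdjoint.of_nonneg (CFC.sqrt_nonneg T)).isSymmetric
  simp only [re_inner_apply_eq_norm_sqrt_sq hT.1]
  refine hasSum_le (fun i => ?_)
    (hasSum_sum fun k _ => hasSum_norm_sq_inner b (CFC.sqrt T (v k))) hT.2.hasSum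
  calc ∑ k ∈ s, ‖⟪b i, CFC.sqrt T (v k)⟫_ℂ‖ ^ 2
      = ∑ k ∈ s, ‖⟪v k, CFC.sqrt T (b i)⟫_ℂ‖ ^ 2 := by
        refine Finset.sum_congr rfl fun k _ => ?_
        rw [norm_inner_symm]
        exact congrArg (‖·‖ ^ 2) (symmetric (v k) (b i))
    _ ≤ ‖CFC.sqrt T (b i)‖ ^ 2 := hv.sum_inner_products_le _
    _ = (⟪b i, T (b i)⟫_ℂ).re := (re_inner_apply_eq_norm_sqrt_sq hT.1 _).symm

lemma of_sum_re_inner_le {e : HilbertBasis κ ℂ E} (hT : 0 ≤ T) {C : ℝ}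
    (hC : ∀ s : Finset κ, ∑ k ∈ s, (⟪e k, T (e k)⟫_ℂ).re ≤ C) :
    IsPosTraceClass b T ∧ trElem b T ≤ C := by
  have diagonal_nonneg (x : E) : 0 ≤ (⟪x, T x⟫_ℂ).re :=
    (re_inner_apply_eq_norm_sqrt_sq hT x).symm ▸ sq_nonneg _
  have traceClass_e : IsPosTraceClass e T :=
    ⟨hT, summable_of_sum_le (fun k => diagonal_nonneg (e k)) hC⟩
  have sum_b_le (s : Finset ι) : ∑ i ∈ s, (⟪b i, T (b i)⟫_ℂ).re ≤ C :=
    (traceClass_e.sum_re_inner_le_trElem b.orthonormal s).trans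
      (traceClass_e.2.tsum_le_of_sum_le hC)
  have traceClass_b : IsPosTraceClass b T :=
    ⟨hT, summable_of_sum_le (fun i => diagonal_nonneg (b i)) sum_b_le⟩
  exact ⟨traceClass_b, traceClass_b.2.tsum_le_of_sum_le sum_b_le⟩

lemma isCompactOperator (hT : IsPosTraceClass b T) : IsCompactOperator T := by
  have hilbertSchmidt : Summable fun i => ‖CFC.sqrt T (b i)‖ ^ 2 := by
    simpa only [re_inner_apply_eq_norm_sqrt_sq hT.1] using hT.2
  rw [← CFC.sqrt_mul_sqrt_self T hT.1]
  exact (isCompactOperator_of_summable_norm_sq b hilbertSchmidt).comp_clm (CFC.sqrt T)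

lemma exists_eigenbasis (hT : IsPosTraceClass b T) :
    ∃ (κ : Type u) (e : HilbertBasis κ ℂ E) (l : κ → ℝ), (∀ k, 0 ≤ l k) ∧
      (∀ k, T (e k) = (l k : ℂ) • e k) ∧ ∀ s : Finset κ, ∑ k ∈ s, l k ≤ trElem b T := by
  obtain ⟨κ, e, l, he⟩ :=
    exists_hilbertBasis_eigenvectors (IsSelfAdjoint.of_nonneg hT.1) hT.isCompactOperator
  have eigenvalue_eq (k : κ) : (⟪e k, T (e k)⟫_ℂ).re = l k :=
    re_inner_apply_eigenvector (e.orthonormal.1 k) (he k)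
  refine ⟨κ, e, l, fun k => ?_, he, fun s => ?_⟩
  · rw [← eigenvalue_eq, re_inner_apply_eq_norm_sqrt_sq hT.1]
    exact sq_nonneg _
  · simpa only [eigenvalue_eq] using hT.sum_re_inner_le_trElem e.orthonormal s

end IsPosTraceClass

lemma trElem_sqrt_mul_self_le {E ι κ : Type*} [NormedAddCommGroup E] [InnerProductSpace ℂ E]
    [CompleteSpace E] {b : HilbertBasis ι ℂ E} {D : E →L[ℂ] E} (hD : IsSelfAdjoint D)
    {d : HilbertBasis κ ℂ E} {l : κ → ℝ} (hd : ∀ k, D (d k) = (l k : ℂ) • d k) {C : ℝ}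
    (hC : ∀ s : Finset κ, ∑ k ∈ s, |l k| ≤ C) :
    IsPosTraceClass b (cfc Real.sqrt (D * D)) ∧ trElem b (cfc Real.sqrt (D * D)) ≤ C := by
  have eigenvector (k : κ) : cfc Real.sqrt (D * D) (d k) = ((|l k| : ℝ) : ℂ) • d k := by
    have eigenvector_sq : (D * D) (d k) = ((l k ^ 2 : ℝ) : ℂ) • d k := by
      rw [mul_apply_eq_comp, hd, map_smul, hd, smul_smul, ← sq, Complex.ofReal_pow]
    rw [cfc_apply_eigenvector (sq D ▸ hD.pow 2) (d.orthonormal.ne_zero k) eigenvector_sq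
      Real.continuous_sqrt.continuousOn, Real.sqrt_sq_eq_abs]
  refine IsPosTraceClass.of_sum_re_inner_le (e := d) (cfc_nonneg fun x _ => Real.sqrt_nonneg x)
    fun s => ?_
  have eigenvalue_eq (k : κ) : (⟪d k, cfc Real.sqrt (D * D) (d k)⟫_ℂ).re = |l k| :=
    re_inner_apply_eigenvector (d.orthonormal.1 k) (eigenvector k)
  simpa only [eigenvalue_eq] using hC s

end TraceClass

section RpowSums

variable {κ κ' : Type*} {l : κ → ℝ} {m : κ' → ℝ} {s : ℝ}

lemma sum_sum_rpow_mul_rpow_mul_le (hl : ∀ k, 0 ≤ l k) (hm : ∀ j, 0 ≤ m j) (hs : 0 ≤ s)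
    (hs' : s ≤ 1) {w : κ → κ' → ℝ} (hw : ∀ k j, 0 ≤ w k j) {M : ℝ} {K : Finset κ} {J : Finset κ'}
    (hrow : ∀ k ∈ K, ∑ j ∈ J, w k j ≤ M) (hcol : ∀ j ∈ J, ∑ k ∈ K, w k j ≤ M) :
    ∑ k ∈ K, ∑ j ∈ J, l k ^ (1 - s) * m j ^ s * w k j ≤
      M * ((1 - s) * ∑ k ∈ K, l k + s * ∑ j ∈ J, m j) := by
  have young (k : κ) (j : κ') : l k ^ (1 - s) * m j ^ s ≤ (1 - s) * l k + s * m j :=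
    Real.geom_mean_le_arith_mean2_weighted (sub_nonneg.2 hs') hs (hl k) (hm j) (by ring)
  calc ∑ k ∈ K, ∑ j ∈ J, l k ^ (1 - s) * m j ^ s * w k j
      ≤ ∑ k ∈ K, ∑ j ∈ J, ((1 - s) * l k + s * m j) * w k j := by
        gcongr with k _ j _
        exacts [hw k j, young k j]
    _ = (1 - s) * ∑ k ∈ K, l k * ∑ j ∈ J, w k j + s * ∑ j ∈ J, m j * ∑ k ∈ K, w k j := by
        simp only [add_mul, Finset.sum_add_distrib, Finset.mul_sum, mul_assoc]
        rw [Finset.sum_comm (s := J)]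
    _ ≤ (1 - s) * ∑ k ∈ K, l k * M + s * ∑ j ∈ J, m j * M := by
        gcongr with k hk j hj
        exacts [hl k, hrow k hk, hm j, hcol j hj]
    _ = M * ((1 - s) * ∑ k ∈ K, l k + s * ∑ j ∈ J, m j) := by
        simp only [← Finset.sum_mul]
        ring

lemma norm_sum_sum_rpow_mul_inner_mul_inner_le {𝕜 E : Type*} [RCLike 𝕜] [NormedAddCommGroup E]
    [InnerProductSpace 𝕜 E] [CompleteSpace E] {e : κ → E} (he : Orthonormal 𝕜 e) {f : κ' → E}
    (hf : Orthonormal 𝕜 f) (X U : E →L[𝕜] E) (hl : ∀ k, 0 ≤ l k) (hm : ∀ j, 0 ≤ m j)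
    (hs : 0 ≤ s) (hs' : s ≤ 1) (K : Finset κ) (J : Finset κ') :
    ‖∑ k ∈ K, ∑ j ∈ J, ((l k ^ (1 - s) : ℝ) : 𝕜) * (((m j ^ s : ℝ) : 𝕜) *
        (inner 𝕜 (e k) (X (f j)) * inner 𝕜 (f j) (U (e k))))‖ ≤
      ‖X‖ * ‖U‖ * ((1 - s) * ∑ k ∈ K, l k + s * ∑ j ∈ J, m j) := by
  let w (k : κ) (j : κ') : ℝ := ‖inner 𝕜 (e k) (X (f j))‖ * ‖inner 𝕜 (f j) (U (e k))‖
  have row (k : κ) : ∑ j ∈ J, w k j ≤ ‖X‖ * ‖U‖ := by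
    simp only [w, ← ContinuousLinearMap.adjoint_inner_left X]
    refine (sum_norm_inner_mul_norm_inner_le hf J _ _).trans ?_
    gcongr
    · simpa [he.1 k] using (ContinuousLinearMap.adjoint X).le_opNorm (e k)
    · simpa [he.1 k] using U.le_opNorm (e k)
  have column (j : κ') : ∑ k ∈ K, w k j ≤ ‖X‖ * ‖U‖ := by
    simp only [w, ← ContinuousLinearMap.adjoint_inner_left U, mul_comm ‖inner 𝕜 (e _) _‖]
    refine (sum_norm_inner_mul_norm_inner_le he K _ _).trans ?_
    rw [mul_comm]
    gcongr
    · simpa [hf.1 j] using X.le_opNorm (f j)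
    · simpa [hf.1 j] using (ContinuousLinearMap.adjoint U).le_opNorm (f j)
  calc _ ≤ ∑ k ∈ K, ∑ j ∈ J, l k ^ (1 - s) * m j ^ s * w k j := by
        refine norm_sum_le_of_le _ fun k _ => norm_sum_le_of_le _ fun j _ => ?_
        simp only [norm_mul, RCLike.norm_ofReal, abs_of_nonneg (Real.rpow_nonneg (hl k) _),
          abs_of_nonneg (Real.rpow_nonneg (hm j) _), w, mul_assoc, le_refl]
    _ ≤ _ := sum_sum_rpow_mul_rpow_mul_le hl hm hs hs' (fun k j => by positivity)
        (fun k _ => row k) fun j _ => column j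

end RpowSums

lemma norm_map_intervalIntegral_le {𝕜 A F : Type*} [RCLike 𝕜] [NormedAddCommGroup A]
    [NormedSpace ℝ A] [NormedSpace 𝕜 A] [CompleteSpace A] [NormedAddCommGroup F] [NormedSpace ℝ F]
    [NormedSpace 𝕜 F] [CompleteSpace F] (L : A →L[𝕜] F) {f : ℝ → A} {g : ℝ → ℝ} {a b : ℝ}
    (hab : a ≤ b) (hg : IntervalIntegrable g volume a b)
    (hfg : ∀ s ∈ Set.Ioc a b, ‖L (f s)‖ ≤ g s) : ‖L (∫ s in a..b, f s)‖ ≤ ∫ s in a..b, g s := by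
  by_cases hf : IntervalIntegrable f volume a b
  · rw [← L.intervalIntegral_comp_comm hf]
    exact intervalIntegral.norm_integral_le_of_norm_le hab (.of_forall hfg) hg
  · rw [intervalIntegral.integral_undef hf, map_zero, norm_zero]
    rw [intervalIntegral.integral_of_le hab]
    exact setIntegral_nonneg measurableSet_Ioc fun s hs => (norm_nonneg _).trans (hfg s hs)

section Duhamel

variable {E ι κ : Type*} [NormedAddCommGroup E] [InnerProductSpace ℂ E] [CompleteSpace E]
  {b : HilbertBasis ι ℂ E} {ρ σ X : E →L[ℂ] E}

lemma opow_apply_eigenvector (hρ : IsSelfAdjoint ρ) {e : E} (he : e ≠ 0) {l : ℝ}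
    (h : ρ e = (l : ℂ) • e) {t : ℝ} (ht : 0 ≤ t) :
    opow ρ t e = ((l ^ t : ℝ) : ℂ) • e :=
  cfc_apply_eigenvector hρ he h (Real.continuous_rpow_const ht).continuousOn

lemma opow_zero (hρ : IsSelfAdjoint ρ) : opow ρ 0 = 1 := by
  simpa only [opow, Real.rpow_zero] using cfc_const_one ℝ ρ

lemma opow_one (hρ : IsSelfAdjoint ρ) : opow ρ 1 = ρ := by
  simpa only [opow, Real.rpow_one] using cfc_id' ℝ ρ

lemma norm_sum_inner_opow_mul_opow_le (hρ : IsPosTraceClass b ρ) (hσ : IsPosTraceClass b σ)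
    (X : E →L[ℂ] E) {d : κ → E} (hd : Orthonormal ℂ d) {c : κ → ℂ} (hc : ∀ i, ‖c i‖ ≤ 1) {s : ℝ}
    (hs : 0 ≤ s) (hs' : s ≤ 1) (F : Finset κ) :
    ‖∑ i ∈ F, c i * ⟪d i, (opow ρ (1 - s) * X * opow σ s) (d i)⟫_ℂ‖ ≤
      ‖X‖ * ((1 - s) * trElem b ρ + s * trElem b σ) := by
  obtain ⟨κρ, e, l, hl, he, sum_l_le⟩ := hρ.exists_eigenbasis
  obtain ⟨κσ, f, m, hm, hf, sum_m_le⟩ := hσ.exists_eigenbasis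
  have hes (k : κρ) : opow ρ (1 - s) (e k) = ((l k ^ (1 - s) : ℝ) : ℂ) • e k :=
    opow_apply_eigenvector (.of_nonneg hρ.1) (e.orthonormal.ne_zero k) (he k) (sub_nonneg.2 hs')
  have hfs (j : κσ) : opow σ s (f j) = ((m j ^ s : ℝ) : ℂ) • f j :=
    opow_apply_eigenvector (.of_nonneg hσ.1) (f.orthonormal.ne_zero j) (hf j) hs
  let U : E →L[ℂ] E := ∑ i ∈ F, c i • InnerProductSpace.rankOne ℂ (d i) (d i)
  have hU : ‖U‖ ≤ 1 := norm_sum_smul_rankOne_le_one hd F hc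
  have expansion_ρ := hasSum_eigenvalue_mul_inner_sum_smul_rankOne e (cfc_predicate _ ρ) hes
    (X * opow σ s) F c d
  refine le_of_tendsto expansion_ρ.norm (.of_forall fun K => ?_)
  have expansion_σ := hasSum_sum (s := K) fun k _ => (hasSum_eigenvalue_mul_inner_mul_inner f
    (cfc_predicate _ σ) hfs (ContinuousLinearMap.adjoint X (e k)) (U (e k))).mul_left
      ((l k ^ (1 - s) : ℝ) : ℂ)
  simp only [ContinuousLinearMap.adjoint_inner_left] at expansion_σ
  refine le_of_tendsto expansion_σ.norm (.of_forall fun J => ?_)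
  rw [Finset.sum_comm]
  calc _ ≤ ‖X‖ * ‖U‖ * ((1 - s) * ∑ k ∈ K, l k + s * ∑ j ∈ J, m j) :=
        norm_sum_sum_rpow_mul_inner_mul_inner_le e.orthonormal f.orthonormal X U hl hm hs hs' K J
    _ ≤ ‖X‖ * ((1 - s) * trElem b ρ + s * trElem b σ) := by
        have sum_l_nonneg : 0 ≤ ∑ k ∈ K, l k := Finset.sum_nonneg fun k _ => hl k
        have sum_m_nonneg : 0 ≤ ∑ j ∈ J, m j := Finset.sum_nonneg fun j _ => hm j
        gcongr
        exacts [mul_le_of_le_one_right (norm_nonneg X) hU, sum_l_le K, sum_m_le J]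

lemma IsExpPerturbed.sub_eq_integral (h : IsExpPerturbed ρ σ X) (hρ : IsSelfAdjoint ρ)
    (hσ : IsSelfAdjoint σ) :
    ρ - σ = ∫ s in (0 : ℝ)..1, opow ρ (1 - s) * X * opow σ s := by
  have duhamel := h 1 zero_le_one
  rw [opow_one hρ, opow_one hσ] at duhamel
  rw [sub_eq_iff_eq_add']
  exact (eq_sub_iff_add_eq.1 duhamel).symm

lemma IsExpPerturbed.norm_sum_inner_sub_le (h : IsExpPerturbed ρ σ X) (hρ : IsPosTraceClass b ρ)
    (hσ : IsPosTraceClass b σ) {d : κ → E} (hd : Orthonormal ℂ d) {c : κ → ℂ}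
    (hc : ∀ i, ‖c i‖ ≤ 1) (F : Finset κ) :
    ‖∑ i ∈ F, c i * ⟪d i, (ρ - σ) (d i)⟫_ℂ‖ ≤ (trElem b ρ + trElem b σ) / 2 * ‖X‖ := by
  let L : (E →L[ℂ] E) →L[ℂ] ℂ :=
    ∑ i ∈ F, c i • (innerSL ℂ (d i)).comp (ContinuousLinearMap.apply ℂ E (d i))
  have hL (T : E →L[ℂ] E) : L T = ∑ i ∈ F, c i * ⟪d i, T (d i)⟫_ℂ := by simp [L]
  rw [← hL, h.sub_eq_integral (.of_nonneg hρ.1) (.of_nonneg hσ.1)]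
  calc _ ≤ ∫ s in (0 : ℝ)..1, ‖X‖ * ((1 - s) * trElem b ρ + s * trElem b σ) := by
        refine norm_map_intervalIntegral_le L zero_le_one
          (Continuous.intervalIntegrable (by fun_prop) 0 1) fun s hs => ?_
        rw [hL]
        exact norm_sum_inner_opow_mul_opow_le hρ hσ X hd hc hs.1.le hs.2 F
    _ = (trElem b ρ + trElem b σ) / 2 * ‖X‖ := by
        have affine (s : ℝ) : (1 - s) * trElem b ρ + s * trElem b σ =
            trElem b ρ + s * (trElem b σ - trElem b ρ) := by ring
        simp only [affine]
        rw [intervalIntegral.integral_const_mul, intervalIntegral.integral_add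
          (by simp) (Continuous.intervalIntegrable (by fun_prop) 0 1),
          intervalIntegral.integral_mul_const, integral_id, intervalIntegral.integral_const]
        simp only [smul_eq_mul]
        ring

lemma IsExpPerturbed.sum_abs_eigenvalue_sub_le (h : IsExpPerturbed ρ σ X)
    (hρ : IsPosTraceClass b ρ) (hσ : IsPosTraceClass b σ) {d : κ → E} (hd : Orthonormal ℂ d)
    {l : κ → ℝ} (hl : ∀ i, (ρ - σ) (d i) = (l i : ℂ) • d i) (F : Finset κ) :
    ∑ i ∈ F, |l i| ≤ (trElem b ρ + trElem b σ) / 2 * ‖X‖ := by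
  have sign_mul_inner (i : κ) : ((SignType.sign (l i) : ℝ) : ℂ) * ⟪d i, (ρ - σ) (d i)⟫_ℂ =
      ((|l i| : ℝ) : ℂ) := by
    rw [hl, inner_smul_right, inner_self_eq_norm_sq_to_K, hd.1 i]
    simp [← Complex.ofReal_mul]
  have norm_sign_le (i : κ) : ‖((SignType.sign (l i) : ℝ) : ℂ)‖ ≤ 1 := by
    rcases lt_trichotomy (l i) 0 with hneg | hzero | hpos
    · simp [sign_neg hneg]
    · simp [hzero]
    · simp [sign_pos hpos]
  have bound := h.norm_sum_inner_sub_le hρ hσ hd norm_sign_le F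
  simp only [sign_mul_inner, ← Complex.ofReal_sum, Complex.norm_real] at bound
  exact (Real.le_norm_self _).trans bound

theorem IsExpPerturbed.trElem_sqrt_sq_sub_le (h : IsExpPerturbed ρ σ X)
    (hρ : IsPosTraceClass b ρ) (hσ : IsPosTraceClass b σ) :
    IsPosTraceClass b (cfc Real.sqrt ((ρ - σ) * (ρ - σ))) ∧
      trElem b (cfc Real.sqrt ((ρ - σ) * (ρ - σ))) ≤
        (trElem b ρ + trElem b σ) / 2 * ‖X‖ := by
  have selfAdjoint : IsSelfAdjoint (ρ - σ) :=
    (IsSelfAdjoint.of_nonneg hρ.1).sub (IsSelfAdjoint.of_nonneg hσ.1)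
  obtain ⟨κ, d, l, hd⟩ := exists_hilbertBasis_eigenvectors selfAdjoint
    (hρ.isCompactOperator.sub hσ.isCompactOperator)
  exact trElem_sqrt_mul_self_le selfAdjoint hd
    (h.sum_abs_eigenvalue_sub_le hρ hσ d.orthonormal hd)

lemma SatisfiesAraki.norm_le_arakiNorm (h : SatisfiesAraki ρ X) (hρ : IsSelfAdjoint ρ) :
    ‖X‖ ≤ arakiNorm ρ X := by
  refine le_csInf ?_ ?_
  · obtain ⟨F, hF⟩ := h
    obtain ⟨M, hM⟩ := hF.2.1
    exact ⟨max M 0, le_max_right _ _, F, hF, fun t ht => (hM t ht).trans (le_max_left _ _)⟩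
  · rintro M ⟨-, F, ⟨-, -, intertwining, -⟩, hM⟩
    have F_zero : F 0 = X := by
      simpa [opow_zero hρ] using intertwining 0 le_rfl (by norm_num)
    exact F_zero ▸ hM 0 (by simp)

end Duhamel

theorem statement12_general {E ι : Type*} [NormedAddCommGroup E] [InnerProductSpace ℂ E]
    [CompleteSpace E] (b : HilbertBasis ι ℂ E) (ρ σ X : E →L[ℂ] E)
    (hρ : IsPosTraceClass b ρ) (hσ : IsPosTraceClass b σ) (hσX : IsExpPerturbed ρ σ X) :
    IsPosTraceClass b (cfc Real.sqrt ((ρ - σ) * (ρ - σ))) ∧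
    trElem b (cfc Real.sqrt ((ρ - σ) * (ρ - σ))) ≤ (trElem b ρ + trElem b σ) / 2 * ‖X‖ ∧
    (SatisfiesAraki ρ X → ‖X‖ ≤ arakiNorm ρ X ∧
      trElem b (cfc Real.sqrt ((ρ - σ) * (ρ - σ))) ≤
        (trElem b ρ + trElem b σ) / 2 * arakiNorm ρ X) := by
  obtain ⟨traceClass, trElem_le⟩ := hσX.trElem_sqrt_sq_sub_le hρ hσ
  refine ⟨traceClass, trElem_le, fun hX => ?_⟩
  have norm_le : ‖X‖ ≤ arakiNorm ρ X := hX.norm_le_arakiNorm (.of_nonneg hρ.1)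
  have trace_ρ_nonneg := hρ.trElem_nonneg
  have trace_σ_nonneg := hσ.trElem_nonneg
  exact ⟨norm_le, trElem_le.trans (by gcongr)⟩

/-- Let `ρ = exp (-H₀)` and `σ = ρ_X = exp (-(H₀+X))` be faithful
density operators (`Tr ρ = Tr σ = 1`) with `X` bounded (self-adjoint) and `σ` nearby `ρ`.
Then the trace-norm distance is controlled by the operator norm of the relative
Hamiltonian, `‖ρ - σ‖₁ = Tr |ρ - σ| ≤ ‖X‖`; consequently, since `‖X‖ ≤ ‖X‖_A`, the trace
norm on states is weaker than the Araki norm on perturbations. -/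
theorem statement12 {ι : Type*} (b : HilbertBasis ι ℂ H) (ρ σ X : H →L[ℂ] H)
    (hρ : IsFiniteWeight b ρ) (hσ : IsFiniteWeight b σ)
    (hρtr : trElem b ρ = 1) (hσtr : trElem b σ = 1)
    (hX : IsSelfAdjoint X) (hσX : IsExpPerturbed ρ σ X) (hnear : IsNearby σ ρ) :
    trElem b (cfc Real.sqrt ((ρ - σ) * (ρ - σ))) ≤ ‖X‖ ∧
    (SatisfiesAraki ρ X → ‖X‖ ≤ arakiNorm ρ X ∧
      trElem b (cfc Real.sqrt ((ρ - σ) * (ρ - σ))) ≤ arakiNorm ρ X) := by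
  simpa [hρtr, hσtr] using
    (statement12_general b ρ σ X ⟨hρ.1, hρ.2.2⟩ ⟨hσ.1, hσ.2.2⟩ hσX).2
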